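/- Let f : {0,1}^n → ℝ be non-constant, let σ²(f) = E[f²] − (E f)² > 0, and let E(f,f) = E_x Σ_{i=1}^n (f(x) − f(x⊕e_i))². Then the martingale differences d_i of f satisfy Σ_{i=1}^n (E|d_i|)² ≥ σ²(f) · exp( − E(f,f) / (2 σ²(f)) ). -/

import Mathlib

open Finset

/-- Expectation with respect to the uniform measure on the discrete cube `{0,1}^n`. -/
noncomputable def cubeE {n : ℕ} (f : (Fin n → Bool) → ℝ) : ℝ :=
  (∑ x : Fin n → Bool, f x) / 2 ^ n

/-- `x ⊕ e_i` : flip the `i`-th coordinate of `x`. -/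
def flipAt {n : ℕ} (x : Fin n → Bool) (i : Fin n) : Fin n → Bool :=
  Function.update x i (!x i)

/-- Influence of the `i`-th variable of a Boolean function,
`I_i(f) = Pr_x[f(x) ≠ f(x ⊕ e_i)]` under the uniform measure. -/
noncomputable def infl {n : ℕ} (f : (Fin n → Bool) → Bool) (i : Fin n) : ℝ :=
  cubeE (fun x => if f x ≠ f (flipAt x i) then 1 else 0)

/-- Expectation of a Boolean function under the uniform measure. -/
noncomputable def meanB {n : ℕ} (f : (Fin n → Bool) → Bool) : ℝ :=
  cubeE (fun x => if f x then 1 else 0)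

/-- Conditional expectation given the first `j` coordinates: `condE f j x` is the
average of `f` over all `y` agreeing with `x` in the first `j` coordinates. -/
noncomputable def condE {n : ℕ} (f : (Fin n → Bool) → ℝ) (j : ℕ) (x : Fin n → Bool) : ℝ :=
  (∑ y : Fin n → Bool, if ∀ k : Fin n, (k : ℕ) < j → y k = x k then f y else 0) / 2 ^ (n - j)

/-- The Dirichlet form `E(f,f) = E_x Σ_i (f(x) - f(x ⊕ e_i))²`. -/
noncomputable def energy {n : ℕ} (f : (Fin n → Bool) → ℝ) : ℝ :=
  cubeE (fun x => ∑ i : Fin n, (f x - f (flipAt x i)) ^ 2)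

/-- Entropy of a nonnegative function: `Ent(g) = E[g log g] - E g · log E g`
(the convention `0 log 0 = 0` holds since `Real.log 0 = 0`). -/
noncomputable def ent {n : ℕ} (g : (Fin n → Bool) → ℝ) : ℝ :=
  cubeE (fun x => g x * Real.log (g x)) - cubeE g * Real.log (cubeE g)

/-!
The martingale differences `dᵢ` are orthogonal, and so are their discrete gradients; hence
`σ²(f) = ∑ E[dᵢ²]` and `E(f,f) = ∑ E(dᵢ,dᵢ)`. The logarithmic Sobolev inequality on the cube gives
`E(dᵢ,dᵢ) / 2 ≥ Ent(dᵢ²)`, and the log sum inequality gives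
`Ent(dᵢ²) ≥ E[dᵢ²] log (E[dᵢ²] / (E|dᵢ|)²)`. Summing over `i` with the log sum inequality once more,
`E(f,f) / 2 ≥ σ²(f) log (σ²(f) / ∑ (E|dᵢ|)²)`, which rearranges to the claim.
-/

open scoped BigOperators

section LogSum

variable {ι : Type*}

lemma mul_log_add_sub_le_mul_log_div {a b c : ℝ} (ha : 0 ≤ a) (hb : 0 ≤ b) (hab : b = 0 → a = 0)
    (hc : 0 < c) : a * Real.log c + a - c * b ≤ a * Real.log (a / b) := by
  rcases ha.eq_or_lt with rfl | ha
  · simpa using mul_nonneg hc.le hb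
  have hb : 0 < b := hb.lt_of_ne' fun h => ha.ne' (hab h)
  have hlog := Real.one_sub_inv_le_log_of_pos (x := a / b / c) (by positivity)
  rw [Real.log_div (by positivity) hc.ne'] at hlog
  calc a * Real.log c + a - c * b = a * (Real.log c + (1 - (a / b / c)⁻¹)) := by field_simp; ring
    _ ≤ a * Real.log (a / b) := by gcongr; linarith

theorem sum_mul_log_sum_div_sum_le (s : Finset ι) {a b : ι → ℝ} (ha : ∀ i ∈ s, 0 ≤ a i)
    (hb : ∀ i ∈ s, 0 ≤ b i) (hab : ∀ i ∈ s, b i = 0 → a i = 0) :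
    (∑ i ∈ s, a i) * Real.log ((∑ i ∈ s, a i) / ∑ i ∈ s, b i) ≤
      ∑ i ∈ s, a i * Real.log (a i / b i) := by
  have zero_of_zero (h : ∀ i ∈ s, a i = 0) :
      (∑ i ∈ s, a i) * Real.log ((∑ i ∈ s, a i) / ∑ i ∈ s, b i) ≤
        ∑ i ∈ s, a i * Real.log (a i / b i) := by
    rw [sum_eq_zero h, zero_mul]
    exact (sum_eq_zero fun i hi => by rw [h i hi, zero_mul]).ge
  rcases (sum_nonneg ha).eq_or_lt with hA | hA
  · exact zero_of_zero ((sum_eq_zero_iff_of_nonneg ha).1 hA.symm)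
  rcases (sum_nonneg hb).eq_or_lt with hB | hB
  · exact zero_of_zero fun i hi => hab i hi ((sum_eq_zero_iff_of_nonneg hb).1 hB.symm i hi)
  set A := ∑ i ∈ s, a i
  set B := ∑ i ∈ s, b i
  calc A * Real.log (A / B) = A * Real.log (A / B) + A - A / B * B := by field_simp; ring
    _ = ∑ i ∈ s, (a i * Real.log (A / B) + a i - A / B * b i) := by
      rw [sum_sub_distrib, sum_add_distrib, ← sum_mul, ← mul_sum]
    _ ≤ ∑ i ∈ s, a i * Real.log (a i / b i) := sum_le_sum fun i hi =>
      mul_log_add_sub_le_mul_log_div (ha i hi) (hb i hi) (hab i hi) (div_pos hA hB)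

theorem expect_mul_log_expect_div_expect_le [Fintype ι] {a b : ι → ℝ} (ha : ∀ i, 0 ≤ a i)
    (hb : ∀ i, 0 ≤ b i) (hab : ∀ i, b i = 0 → a i = 0) :
    (𝔼 i, a i) * Real.log ((𝔼 i, a i) / 𝔼 i, b i) ≤ 𝔼 i, a i * Real.log (a i / b i) := by
  cases isEmpty_or_nonempty ι
  · simp
  simp only [Fintype.expect_eq_sum_div_card]
  rw [div_div_div_cancel_right₀ (by positivity), div_mul_eq_mul_div]
  gcongr
  exact sum_mul_log_sum_div_sum_le univ (fun i _ => ha i) (fun i _ => hb i) fun i _ => hab i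

end LogSum

section Expect

variable {ι : Type*} [Fintype ι]

lemma expect_abs_eq_zero_iff {g : ι → ℝ} : 𝔼 i, |g i| = 0 ↔ g = 0 := by
  rw [Fintype.expect_eq_zero_iff_of_nonneg fun i => abs_nonneg (g i)]
  simp only [funext_iff, Pi.zero_apply, abs_eq_zero]

lemma expect_sq_mul_log_expect_sq_div_sq_expect_abs_le (g : ι → ℝ) :
    (𝔼 i, g i ^ 2) * Real.log ((𝔼 i, g i ^ 2) / (𝔼 i, |g i|) ^ 2) ≤
      𝔼 i, g i ^ 2 * Real.log (g i ^ 2) - (𝔼 i, g i ^ 2) * Real.log (𝔼 i, g i ^ 2) := by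
  rcases eq_or_ne (𝔼 i, g i ^ 2) 0 with hA | hA
  · have hg (i : ι) : g i = 0 := by
      rw [Fintype.expect_eq_zero_iff_of_nonneg fun i => sq_nonneg (g i)] at hA
      simpa using congrFun hA i
    simp [hg]
  have hm : 𝔼 i, |g i| ≠ 0 := fun h => hA (by simp [expect_abs_eq_zero_iff.1 h])
  have hlogsum := expect_mul_log_expect_div_expect_le (fun i => sq_nonneg (g i))
    (fun i => abs_nonneg (g i)) (fun i h => by simpa using h)
  have hterm (i : ι) : g i ^ 2 * Real.log (g i ^ 2 / |g i|) =
      g i ^ 2 * Real.log (g i ^ 2) / 2 := by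
    rw [← sq_abs (g i), sq |g i|, mul_self_div_self, ← sq, Real.log_pow]
    push_cast
    ring
  simp only [hterm, ← expect_div] at hlogsum
  rw [Real.log_div hA hm] at hlogsum
  rw [Real.log_div hA (pow_ne_zero 2 hm), Real.log_pow]
  push_cast
  linarith

lemma sq_sqrt_expect_sq_sub_sqrt_expect_sq_le (f g : ι → ℝ) :
    (√(𝔼 i, f i ^ 2) - √(𝔼 i, g i ^ 2)) ^ 2 ≤ 𝔼 i, (f i - g i) ^ 2 := by
  have hf : 0 ≤ 𝔼 i, f i ^ 2 := expect_nonneg fun i _ => sq_nonneg (f i)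
  have hg : 0 ≤ 𝔼 i, g i ^ 2 := expect_nonneg fun i _ => sq_nonneg (g i)
  have cauchy_schwarz : 𝔼 i, f i * g i ≤ √(𝔼 i, f i ^ 2) * √(𝔼 i, g i ^ 2) := by
    rw [← Real.sqrt_mul hf]
    exact Real.le_sqrt_of_sq_le (expect_mul_sq_le_sq_mul_sq univ f g)
  calc (√(𝔼 i, f i ^ 2) - √(𝔼 i, g i ^ 2)) ^ 2
      = 𝔼 i, f i ^ 2 - 2 * (√(𝔼 i, f i ^ 2) * √(𝔼 i, g i ^ 2)) + 𝔼 i, g i ^ 2 := by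
        rw [sub_sq, Real.sq_sqrt hf, Real.sq_sqrt hg, mul_assoc]
    _ ≤ 𝔼 i, f i ^ 2 - 2 * 𝔼 i, f i * g i + 𝔼 i, g i ^ 2 := by gcongr
    _ = 𝔼 i, (f i - g i) ^ 2 := by
        simp only [sub_sq, expect_add_distrib, expect_sub_distrib, mul_expect, mul_assoc]

end Expect

section TwoPoint

/-- The amount by which the logarithmic Sobolev inequality on the two-point space would fail: the
entropy of the square of the function with values `a`, `b`, minus half its Dirichlet form
`(a - b) ^ 2`. -/
noncomputable def twoPointExcess (a b : ℝ) : ℝ :=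
  (a ^ 2 * Real.log (a ^ 2) + b ^ 2 * Real.log (b ^ 2)) / 2 -
    (a ^ 2 + b ^ 2) / 2 * Real.log ((a ^ 2 + b ^ 2) / 2) - (a - b) ^ 2 / 2

lemma twoPointExcess_comm (a b : ℝ) : twoPointExcess a b = twoPointExcess b a := by
  unfold twoPointExcess
  rw [add_comm (b ^ 2) (a ^ 2)]
  ring

lemma twoPointExcess_self (a : ℝ) : twoPointExcess a a = 0 := by
  simp [twoPointExcess]

lemma continuous_twoPointExcess_right (a : ℝ) : Continuous (twoPointExcess a) := by
  have hb : Continuous fun b : ℝ => b ^ 2 * Real.log (b ^ 2) :=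
    Real.continuous_mul_log.comp (continuous_pow 2)
  have hm : Continuous fun b : ℝ => (a ^ 2 + b ^ 2) / 2 * Real.log ((a ^ 2 + b ^ 2) / 2) :=
    Real.continuous_mul_log.comp (by fun_prop)
  exact ((continuous_const.add hb).div_const 2 |>.sub hm).sub (by fun_prop)

lemma hasDerivAt_twoPointExcess_right (a : ℝ) {b : ℝ} (hb : b ≠ 0) :
    HasDerivAt (twoPointExcess a)
      (b * Real.log (b ^ 2) - b * Real.log ((a ^ 2 + b ^ 2) / 2) + (a - b)) b := by
  have hsq : HasDerivAt (fun b : ℝ => b ^ 2) (2 * b) b := by simpa using hasDerivAt_pow 2 b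
  have hmean : HasDerivAt (fun b : ℝ => (a ^ 2 + b ^ 2) / 2) b b := by
    simpa using (hsq.const_add (a ^ 2)).div_const 2
  have hsub : HasDerivAt (fun b : ℝ => (a - b) ^ 2) (-(2 * (a - b))) b := by
    simpa using ((hasDerivAt_id' b).const_sub a).fun_pow 2
  have hlog_sq := (Real.hasDerivAt_mul_log (x := b ^ 2) (by positivity)).comp b hsq
  have hlog_mean :=
    (Real.hasDerivAt_mul_log (x := (a ^ 2 + b ^ 2) / 2) (by positivity)).comp b hmean
  refine ((((hlog_sq.const_add _).div_const 2).sub hlog_mean).sub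
    (hsub.div_const 2)).congr_deriv ?_
  ring

lemma log_mean_sq_le {a b : ℝ} (hb : 0 < b) (hab : b ≤ a) :
    Real.log ((a ^ 2 + b ^ 2) / 2) ≤ Real.log (b ^ 2) + (a / b - 1) := by
  have hab' : 0 ≤ a / b - 1 := sub_nonneg.2 ((one_le_div hb).2 hab)
  -- The quadratic Taylor polynomial of `exp` at `a / b - 1` is exactly `(1 + (a / b) ^ 2) / 2`.
  have hratio : (a ^ 2 + b ^ 2) / 2 / b ^ 2 ≤ Real.exp (a / b - 1) := by
    refine le_of_eq_of_le ?_ (Real.quadratic_le_exp_of_nonneg hab')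
    field_simp
    ring
  rwa [← Real.log_le_iff_le_exp (by positivity), Real.log_div (by positivity) (by positivity),
    sub_le_iff_le_add'] at hratio

lemma twoPointExcess_nonpos_of_le {a b : ℝ} (hb : 0 ≤ b) (hab : b ≤ a) :
    twoPointExcess a b ≤ 0 := by
  have hmono : MonotoneOn (twoPointExcess a) (Set.Icc 0 a) := by
    refine monotoneOn_of_hasDerivWithinAt_nonneg (convex_Icc 0 a)
      (continuous_twoPointExcess_right a).continuousOn
      (fun x hx => (hasDerivAt_twoPointExcess_right a ?_).hasDerivWithinAt) fun x hx => ?_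
    all_goals rw [interior_Icc] at hx
    · exact hx.1.ne'
    · have hlog := mul_le_mul_of_nonneg_left (log_mean_sq_le hx.1 hx.2.le) hx.1.le
      rw [mul_add, mul_sub, mul_div_cancel₀ a hx.1.ne', mul_one] at hlog
      linarith
  exact (hmono ⟨hb, hab⟩ ⟨hb.trans hab, le_rfl⟩ hab).trans_eq (twoPointExcess_self a)

lemma twoPointExcess_nonpos {a b : ℝ} (ha : 0 ≤ a) (hb : 0 ≤ b) : twoPointExcess a b ≤ 0 := by
  rcases le_total b a with h | h
  · exact twoPointExcess_nonpos_of_le hb h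
  · exact twoPointExcess_comm a b ▸ twoPointExcess_nonpos_of_le ha h

end TwoPoint

section Cube

variable {n : ℕ}

/-- The restriction of `f` to the face `x₀ = b` of the cube, as a function of the remaining
coordinates. -/
def cubeSlice (f : (Fin (n + 1) → Bool) → ℝ) (b : Bool) : (Fin n → Bool) → ℝ :=
  fun y => f (Fin.cons b y)

/-- The variance `σ²(f)` with respect to the uniform measure on the cube. -/
noncomputable def cubeVar (f : (Fin n → Bool) → ℝ) : ℝ :=
  cubeE (fun x => f x ^ 2) - cubeE f ^ 2

/-- The martingale differences of `f`. Indices start at `0`: `martingaleDiff f j` is `d_{j+1}` in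
the usual numbering. -/
noncomputable def martingaleDiff (f : (Fin n → Bool) → ℝ) (j : ℕ) : (Fin n → Bool) → ℝ :=
  fun x => condE f (j + 1) x - condE f j x

lemma cubeE_eq_expect (f : (Fin n → Bool) → ℝ) : cubeE f = 𝔼 x, f x := by
  simp [cubeE, Fintype.expect_eq_sum_div_card]

lemma cubeE_const (c : ℝ) : cubeE (fun _ : Fin n → Bool => c) = c := by
  rw [cubeE_eq_expect, Fintype.expect_const]

lemma cubeE_add (f g : (Fin n → Bool) → ℝ) :
    cubeE (fun x => f x + g x) = cubeE f + cubeE g := by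
  simp only [cubeE_eq_expect, expect_add_distrib]

lemma cubeE_sub (f g : (Fin n → Bool) → ℝ) :
    cubeE (fun x => f x - g x) = cubeE f - cubeE g := by
  simp only [cubeE_eq_expect, expect_sub_distrib]

lemma cubeE_sq_nonneg (f : (Fin n → Bool) → ℝ) : 0 ≤ cubeE fun x => f x ^ 2 := by
  rw [cubeE_eq_expect]
  exact expect_nonneg fun x _ => sq_nonneg (f x)

lemma sum_cube_succ (f : (Fin (n + 1) → Bool) → ℝ) :
    ∑ x, f x = ∑ y, f (Fin.cons true y) + ∑ y, f (Fin.cons false y) := by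
  rw [← (Fin.consEquiv fun _ : Fin (n + 1) => Bool).sum_comp, Fintype.sum_prod_type,
    Fintype.sum_bool]
  rfl

lemma cubeE_succ (f : (Fin (n + 1) → Bool) → ℝ) :
    cubeE f = (cubeE (cubeSlice f true) + cubeE (cubeSlice f false)) / 2 := by
  simp only [cubeE, sum_cube_succ f, cubeSlice, pow_succ]
  field_simp

lemma condE_zero (f : (Fin n → Bool) → ℝ) (x : Fin n → Bool) : condE f 0 x = cubeE f := by
  simp [condE, cubeE]

lemma condE_succ_cons (f : (Fin (n + 1) → Bool) → ℝ) (j : ℕ) (b : Bool) (y : Fin n → Bool) :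
    condE f (j + 1) (Fin.cons b y) = condE (cubeSlice f b) j y := by
  unfold condE cubeSlice
  rw [sum_cube_succ, Nat.add_sub_add_right]
  cases b <;> simp [Fin.forall_fin_succ]

lemma condE_sub (f g : (Fin n → Bool) → ℝ) (j : ℕ) (x : Fin n → Bool) :
    condE (fun y => f y - g y) j x = condE f j x - condE g j x := by
  simp only [condE, ← sub_div, ← sum_sub_distrib, ite_sub_ite, sub_zero]

lemma martingaleDiff_sub (f g : (Fin n → Bool) → ℝ) (j : ℕ) (x : Fin n → Bool) :
    martingaleDiff (fun y => f y - g y) j x = martingaleDiff f j x - martingaleDiff g j x := by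
  simp only [martingaleDiff, condE_sub]
  ring

lemma cubeSlice_martingaleDiff_zero (f : (Fin (n + 1) → Bool) → ℝ) (b : Bool) :
    cubeSlice (martingaleDiff f 0) b = fun _ => cubeE (cubeSlice f b) - cubeE f := by
  funext y
  simp only [cubeSlice, martingaleDiff, condE_succ_cons, condE_zero]

lemma cubeSlice_martingaleDiff_succ (f : (Fin (n + 1) → Bool) → ℝ) (j : ℕ) (b : Bool) :
    cubeSlice (martingaleDiff f (j + 1)) b = martingaleDiff (cubeSlice f b) j := by
  funext y
  simp only [cubeSlice, martingaleDiff, condE_succ_cons]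

lemma cubeE_sq_succ (f : (Fin (n + 1) → Bool) → ℝ) :
    cubeE (fun x => f x ^ 2) =
      (cubeE (fun y => cubeSlice f true y ^ 2) + cubeE (fun y => cubeSlice f false y ^ 2)) / 2 :=
  cubeE_succ fun x => f x ^ 2

theorem sum_cubeE_martingaleDiff_sq (f : (Fin n → Bool) → ℝ) :
    ∑ i : Fin n, cubeE (fun x => martingaleDiff f i x ^ 2) = cubeVar f := by
  induction n with
  | zero => simp [cubeVar, cubeE]
  | succ n ih =>
    simp only [Fin.sum_univ_succ, Fin.val_zero, Fin.val_succ, cubeE_sq_succ,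
      cubeSlice_martingaleDiff_zero, cubeSlice_martingaleDiff_succ, cubeE_const]
    rw [← sum_div, sum_add_distrib, ih, ih]
    simp only [cubeVar]
    rw [cubeE_succ f, cubeE_sq_succ f]
    ring

lemma flipAt_cons_zero (b : Bool) (y : Fin n → Bool) :
    flipAt (Fin.cons b y : Fin (n + 1) → Bool) 0 = Fin.cons (!b) y := by
  simp [flipAt]

lemma flipAt_cons_succ (b : Bool) (y : Fin n → Bool) (i : Fin n) :
    flipAt (Fin.cons b y : Fin (n + 1) → Bool) i.succ = Fin.cons b (flipAt y i) := by
  simp [flipAt, Fin.cons_update]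

lemma energy_succ (f : (Fin (n + 1) → Bool) → ℝ) :
    energy f = (energy (cubeSlice f true) + energy (cubeSlice f false)) / 2 +
      cubeE (fun y => (cubeSlice f true y - cubeSlice f false y) ^ 2) := by
  unfold energy
  rw [cubeE_succ]
  unfold cubeSlice
  simp only [Fin.sum_univ_succ, flipAt_cons_zero, flipAt_cons_succ, Bool.not_true,
    Bool.not_false, cubeE_add]
  simp only [sub_sq_comm (f (Fin.cons false _)) (f (Fin.cons true _))]
  ring

lemma energy_const (c : ℝ) : energy (fun _ : Fin n → Bool => c) = 0 := by
  simp [energy, cubeE]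

theorem sum_energy_martingaleDiff (f : (Fin n → Bool) → ℝ) :
    ∑ i : Fin n, energy (martingaleDiff f i) = energy f := by
  induction n with
  | zero => simp [energy, cubeE]
  | succ n ih =>
    simp only [Fin.sum_univ_succ, Fin.val_zero, Fin.val_succ, energy_succ (martingaleDiff f _),
      cubeSlice_martingaleDiff_zero, cubeSlice_martingaleDiff_succ, energy_const, cubeE_const,
      ← martingaleDiff_sub]
    rw [sum_add_distrib, ← sum_div, sum_add_distrib, ih, ih, sum_cubeE_martingaleDiff_sq,
      energy_succ f, cubeVar, cubeE_sub]
    ring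

lemma ent_sq_succ_le (g : (Fin (n + 1) → Bool) → ℝ) :
    ent (fun x => g x ^ 2) ≤
      (ent (fun y => cubeSlice g true y ^ 2) + ent (fun y => cubeSlice g false y ^ 2)) / 2 +
        (√(cubeE fun y => cubeSlice g true y ^ 2) -
          √(cubeE fun y => cubeSlice g false y ^ 2)) ^ 2 / 2 := by
  have htwo := twoPointExcess_nonpos (Real.sqrt_nonneg (cubeE fun y => cubeSlice g true y ^ 2))
    (Real.sqrt_nonneg (cubeE fun y => cubeSlice g false y ^ 2))
  simp only [twoPointExcess, Real.sq_sqrt (cubeE_sq_nonneg _)] at htwo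
  unfold ent
  rw [cubeE_succ fun x => g x ^ 2 * Real.log (g x ^ 2), cubeE_sq_succ g]
  unfold cubeSlice at htwo ⊢
  linarith

theorem ent_sq_le_energy_div_two (g : (Fin n → Bool) → ℝ) :
    ent (fun x => g x ^ 2) ≤ energy g / 2 := by
  induction n with
  | zero => simp [ent, energy, cubeE]
  | succ n ih =>
    have hmink := sq_sqrt_expect_sq_sub_sqrt_expect_sq_le (cubeSlice g true) (cubeSlice g false)
    simp only [← cubeE_eq_expect] at hmink
    rw [energy_succ]
    linarith [ent_sq_succ_le g, ih (cubeSlice g true), ih (cubeSlice g false)]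

lemma cubeE_sq_mul_log_le_energy_div_two (g : (Fin n → Bool) → ℝ) :
    cubeE (fun x => g x ^ 2) *
        Real.log (cubeE (fun x => g x ^ 2) / cubeE (fun x => |g x|) ^ 2) ≤ energy g / 2 := by
  refine le_trans ?_ (ent_sq_le_energy_div_two g)
  simpa only [ent, cubeE_eq_expect] using expect_sq_mul_log_expect_sq_div_sq_expect_abs_le g

lemma cubeE_sq_eq_zero_of_cubeE_abs_eq_zero {g : (Fin n → Bool) → ℝ}
    (h : cubeE (fun x => |g x|) = 0) : cubeE (fun x => g x ^ 2) = 0 := by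
  rw [cubeE_eq_expect, expect_abs_eq_zero_iff] at h
  simp [h, cubeE]

lemma sum_sq_cubeE_abs_martingaleDiff_pos {f : (Fin n → Bool) → ℝ} (hf : 0 < cubeVar f) :
    0 < ∑ i : Fin n, cubeE (fun x => |martingaleDiff f i x|) ^ 2 := by
  rw [← sum_cubeE_martingaleDiff_sq] at hf
  obtain ⟨i, hi, hne⟩ := exists_ne_zero_of_sum_ne_zero hf.ne'
  refine sum_pos' (fun _ _ => sq_nonneg _) ⟨i, hi, ?_⟩
  exact pow_two_pos_of_ne_zero fun h => hne (cubeE_sq_eq_zero_of_cubeE_abs_eq_zero h)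

theorem cubeVar_mul_log_le_energy_div_two (f : (Fin n → Bool) → ℝ) :
    cubeVar f *
        Real.log (cubeVar f / ∑ i : Fin n, cubeE (fun x => |martingaleDiff f i x|) ^ 2) ≤
      energy f / 2 := by
  calc cubeVar f * Real.log (cubeVar f / ∑ i : Fin n, cubeE (fun x => |martingaleDiff f i x|) ^ 2)
      ≤ ∑ i : Fin n, cubeE (fun x => martingaleDiff f i x ^ 2) *
          Real.log (cubeE (fun x => martingaleDiff f i x ^ 2) /
            cubeE (fun x => |martingaleDiff f i x|) ^ 2) := by
        rw [← sum_cubeE_martingaleDiff_sq]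
        exact sum_mul_log_sum_div_sum_le univ (fun _ _ => cubeE_sq_nonneg _)
          (fun _ _ => sq_nonneg _)
          fun _ _ h => cubeE_sq_eq_zero_of_cubeE_abs_eq_zero (pow_eq_zero_iff two_ne_zero |>.1 h)
    _ ≤ ∑ i : Fin n, energy (martingaleDiff f i) / 2 :=
        sum_le_sum fun i _ => cubeE_sq_mul_log_le_energy_div_two (martingaleDiff f i)
    _ = energy f / 2 := by rw [← sum_div, sum_energy_martingaleDiff]

end Cube

/-- **Main theorem** (uniform measure): for a non-constant `f : {0,1}^n → ℝ` with
variance `σ²(f) = E[f²] - (E f)² > 0` and Dirichlet form `E(f,f)`, the martingale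
differences `d_i = f_i - f_{i-1}` satisfy
`Σ_i (E|d_i|)² ≥ σ²(f) · exp(-E(f,f)/(2σ²(f)))`. -/
theorem martingale_difference_lower_bound {n : ℕ} (f : (Fin n → Bool) → ℝ)
    (hnc : ∃ x y, f x ≠ f y)
    (hσ : 0 < cubeE (fun x => f x ^ 2) - (cubeE f) ^ 2) :
    ∑ i : Fin n, (cubeE (fun x => |condE f ((i : ℕ) + 1) x - condE f (i : ℕ) x|)) ^ 2 ≥
      (cubeE (fun x => f x ^ 2) - (cubeE f) ^ 2) *
        Real.exp (-(energy f) / (2 * (cubeE (fun x => f x ^ 2) - (cubeE f) ^ 2))) := by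
  change _ ≥ cubeVar f * Real.exp (-(energy f) / (2 * cubeVar f))
  change 0 < cubeVar f at hσ
  change ∑ i : Fin n, cubeE (fun x => |martingaleDiff f i x|) ^ 2 ≥ _
  have hpos := sum_sq_cubeE_abs_martingaleDiff_pos hσ
  have hlog := cubeVar_mul_log_le_energy_div_two f
  set S := ∑ i : Fin n, cubeE (fun x => |martingaleDiff f i x|) ^ 2
  have hratio : cubeVar f / S ≤ Real.exp (energy f / (2 * cubeVar f)) := by
    rw [← Real.log_le_iff_le_exp (div_pos hσ hpos), le_div_iff₀ (by positivity)]
    linarith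
  rw [neg_div, Real.exp_neg, ge_iff_le, ← div_eq_mul_inv, div_le_iff₀ (Real.exp_pos _)]
  exact (div_le_iff₀' hpos).1 hratio
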